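/- For every H₀ in the class 𝓗 there exist a sequence of affine lines (π_n)_{n≥0} in ℝ² and a sequence of compact convex sets (H_n)_{n≥0} with H_{n+1} = S_{π_n}(H_n) for every n ≥ 0, such that H_n converges in Hausdorff distance to a regular hexagon H* with |H*| = |H₀|. (In other words, every centrally symmetric convex hexagon or parallelogram can be transformed into a regular hexagon of the same area by at most countably many Steiner symmetrizations.) -/

import Mathlib

open MeasureTheory Metric Filter Real Set
open scoped Topology ENNReal NNReal RealInnerProductSpace

noncomputable section

/-- The Euclidean plane. -/
abbrev E2 : Type := EuclideanSpace ℝ (Fin 2)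

/-- The line through `x` with direction `v`. -/
def lineThrough (x v : E2) : Set E2 := {y : E2 | ∃ t : ℝ, y = x + t • v}

/-- Steiner symmetrization of `A` with respect to the affine line `{x | ⟪x, v⟫ = c}`,
where `v` is a unit normal vector of the line. -/
def steiner (v : E2) (c : ℝ) (A : Set E2) : Set E2 :=
  {y : E2 | ∃ x : E2, ⟪x, v⟫ = c ∧ (A ∩ lineThrough x v).Nonempty ∧
    ∃ r : ℝ, y = x + r • v ∧
      ENNReal.ofReal (2 * |r|) ≤ μH[1] (A ∩ lineThrough x v)}

/-- The class `𝓗` of centrally symmetric convex hexagons (possibly degenerated to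
parallelograms), i.e. the convex polygons tiling the plane by translations. -/
def Hex (H : Set E2) : Prop :=
  (∃ x₀ p q r : E2, H = (fun y => x₀ + y) '' convexHull ℝ ({p, q, r, -p, -q, -r} : Set E2)) ∧
  (interior H).Nonempty

/-- The `k`-th vertex of the standard regular hexagon. -/
def hexVertex (k : ℕ) : E2 :=
  (WithLp.equiv 2 (Fin 2 → ℝ)).symm ![Real.cos (k * π / 3), Real.sin (k * π / 3)]

/-- The standard regular hexagon, with vertices `(cos (kπ/3), sin (kπ/3))`, `k = 0, …, 5`. -/
def stdHexagon : Set E2 := convexHull ℝ (Set.range fun k : Fin 6 => hexVertex k)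

/-- A similarity of the plane (composition of a rotation, a dilation and a translation,
possibly with a reflection). -/
def IsSimilarity (f : E2 → E2) : Prop :=
  ∃ s : ℝ, 0 < s ∧ ∀ x y, dist (f x) (f y) = s * dist x y

/-- A regular hexagon is any image of the standard one under a similarity. -/
def IsRegularHexagon (H : Set E2) : Prop := ∃ f : E2 → E2, IsSimilarity f ∧ H = f '' stdHexagon

/-- Convergence of a sequence of sets in the Hausdorff distance. -/
def HausdorffTendsto (Hn : ℕ → Set E2) (H : Set E2) : Prop :=
  Tendsto (fun n => EMetric.hausdorffEdist (Hn n) H) atTop (𝓝 0)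

/-- The planar cross product (determinant) of two vectors. -/
def det2 (u w : E2) : ℝ := u 0 * w 1 - u 1 * w 0

/-- `A, B, C, D, E, F` are (consecutive) vertices of the centrally symmetric hexagon `H`:
`H` is their convex hull, `D, E, F` are the antipodes of `A, B, C` with respect to a center
`o`, and `H` has nonempty interior. -/
def HexWithVertices (A B C D E F : E2) (H : Set E2) : Prop :=
  H = convexHull ℝ ({A, B, C, D, E, F} : Set E2) ∧
  (∃ o : E2, D = (2:ℝ) • o - A ∧ E = (2:ℝ) • o - B ∧ F = (2:ℝ) • o - C) ∧
  (interior H).Nonempty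

/-- The vertices `A, B, C, D, E, F` are listed in counterclockwise order. -/
def CCWList (A B C D E F : E2) : Prop :=
  0 ≤ det2 (B - A) (C - B) ∧ 0 ≤ det2 (C - B) (D - C) ∧ 0 ≤ det2 (D - C) (E - D) ∧
  0 ≤ det2 (E - D) (F - E) ∧ 0 ≤ det2 (F - E) (A - F) ∧ 0 ≤ det2 (A - F) (B - A)

/-- The six vertices are distinct and no three of them are collinear. -/
def NondegenerateHex (A B C D E F : E2) : Prop :=
  [A, B, C, D, E, F].Pairwise (· ≠ ·) ∧
  ∀ P Q R : E2, P ∈ ({A, B, C, D, E, F} : Set E2) → Q ∈ ({A, B, C, D, E, F} : Set E2) →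
    R ∈ ({A, B, C, D, E, F} : Set E2) → P ≠ Q → P ≠ R → Q ≠ R →
      ¬ Collinear ℝ ({P, Q, R} : Set E2)

/-!
Symmetrizing a centrally symmetric hexagon with respect to the perpendicular bisector of one of its
sides, the base, keeps that side and makes the hexagon symmetric about this bisector. Up to rigid
motions and scaling, such a hexagon is determined by two numbers: the ratio `u` of the squared
length of the base to the area, and the fraction `ρ` of the height of the base, measured from the
centre, in the sum of the heights of the base and of the vertex on the axis. Symmetrizing next with
respect to the perpendicular bisector of the adjacent side, which becomes the new base, replaces `u`
by `u / 4 + 1 / u` and `ρ` by `(1 - ρ) / 2`. Iterating, `u → 2 / √3` and `ρ → 1 / 3`, the values of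
the regular hexagon, at a geometric rate.

The position converges too. Each step multiplies the base, as a complex number, by `1 / 2 + i / u`,
which tends to `exp (iπ / 3)`. After undoing the rotations by `π / 3` the bases therefore form a
convergent infinite product, and these rotations do not change the regular hexagon centred at the
origin.
-/

section HexHull

variable {V W : Type*} [AddCommGroup V] [Module ℝ V] [AddCommGroup W] [Module ℝ W]

/-- The convex hull of `±p, ±q, ±r`: a hexagon symmetric about the origin when the six points are
in convex position. Hexagons with another centre are obtained by translation. -/
def hexHull (p q r : V) : Set V := convexHull ℝ {p, q, r, -p, -q, -r}

theorem convex_hexHull (p q r : V) : Convex ℝ (hexHull p q r) := convex_convexHull ℝ _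

theorem hexHull_eq_convexHull_range (p q r : V) :
    hexHull p q r = convexHull ℝ (range ![p, q, r, -p, -q, -r]) := by
  simp only [hexHull, Matrix.range_cons, Matrix.range_empty, singleton_union, insert_empty_eq]

theorem image_hexHull {F : Type*} [FunLike F V W] [LinearMapClass F ℝ V W] (f : F) (p q r : V) :
    f '' hexHull p q r = hexHull (f p) (f q) (f r) := by
  have h := (f : V →ₗ[ℝ] W).image_convexHull {p, q, r, -p, -q, -r}
  simpa only [hexHull, LinearMap.coe_coe, image_insert_eq, image_singleton, map_neg] using h

theorem hexHull_rotate (p q r : V) : hexHull q r (-p) = hexHull p q r := by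
  unfold hexHull
  congr 1
  ext x
  simp only [mem_insert_iff, mem_singleton_iff, neg_neg]
  tauto

theorem hexHull_eq_absConvexHull (p q r : V) : hexHull p q r = absConvexHull ℝ {p, q, r} := by
  rw [← convexHull_union_neg_eq_absConvexHull, hexHull]
  congr 1
  ext x
  simp only [mem_insert_iff, mem_singleton_iff, mem_union, Set.mem_neg, neg_eq_iff_eq_neg]
  tauto

theorem hexHull_swap_right (p q r : V) : hexHull p r q = hexHull p q r := by
  rw [hexHull_eq_absConvexHull, hexHull_eq_absConvexHull, pair_comm]

theorem hexHull_neg_right (p q r : V) : hexHull p q (-r) = hexHull p q r := by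
  unfold hexHull
  congr 1
  ext x
  simp only [mem_insert_iff, mem_singleton_iff, neg_neg]
  tauto

theorem hexHull_subset_hexHull {p q r p' q' r' : V} (hp : p ∈ hexHull p' q' r')
    (hq : q ∈ hexHull p' q' r') (hr : r ∈ hexHull p' q' r') :
    hexHull p q r ⊆ hexHull p' q' r' := by
  rw [hexHull_eq_absConvexHull p' q' r'] at *
  rw [hexHull_eq_absConvexHull]
  refine absConvexHull_min ?_ absConvex_absConvexHull
  rintro _ (rfl | rfl | rfl) <;> assumption

theorem sum_smul_mem_of_absConvex {ι : Type*} {K : Set V} (hK : AbsConvex ℝ K) (hne : K.Nonempty)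
    {s : Finset ι} {x : ι → V} (hx : ∀ i ∈ s, x i ∈ K) {a : ι → ℝ} (ha : ∑ i ∈ s, |a i| ≤ 1) :
    ∑ i ∈ s, a i • x i ∈ K := by
  rcases (Finset.sum_nonneg fun i _ => abs_nonneg (a i) : 0 ≤ ∑ i ∈ s, |a i|).eq_or_lt with h | h
  · have ha0 : ∀ i ∈ s, a i = 0 := by
      simpa using (Finset.sum_eq_zero_iff_of_nonneg fun i _ => abs_nonneg (a i)).1 h.symm
    rw [Finset.sum_eq_zero fun i hi => by rw [ha0 i hi, zero_smul]]
    exact hK.1.zero_mem hne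
  · have hsign : ∀ i ∈ s, (SignType.sign (a i) : ℝ) • x i ∈ K := fun i hi =>
      hK.1.smul_mem (by rcases lt_trichotomy (a i) 0 with h | h | h <;> simp [h]) (hx i hi)
    have hmem := hK.1.smul_mem (by rwa [Real.norm_of_nonneg h.le])
      (hK.2.centerMass_mem (fun i _ => abs_nonneg (a i)) h hsign)
    rw [Finset.centerMass, smul_inv_smul₀ h.ne'] at hmem
    simpa only [smul_smul, abs_mul_sign] using hmem

theorem mem_hexHull {p q r x : V} :
    x ∈ hexHull p q r ↔ ∃ a b c : ℝ, |a| + |b| + |c| ≤ 1 ∧ x = a • p + b • q + c • r := by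
  constructor
  · intro hx
    have hconv : Convex ℝ
        {y : V | ∃ a b c : ℝ, |a| + |b| + |c| ≤ 1 ∧ y = a • p + b • q + c • r} := by
      rintro _ ⟨a, b, c, h, rfl⟩ _ ⟨a', b', c', h', rfl⟩ s t hs ht hst
      refine ⟨s * a + t * a', s * b + t * b', s * c + t * c', ?_, by module⟩
      have key : ∀ y z : ℝ, |s * y + t * z| ≤ s * |y| + t * |z| := fun y z => by
        simpa only [abs_mul, abs_of_nonneg hs, abs_of_nonneg ht] using abs_add_le (s * y) (t * z)
      nlinarith [key a a', key b b', key c c']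
    refine convexHull_min ?_ hconv hx
    rintro _ (rfl | rfl | rfl | rfl | rfl | rfl)
    exacts [⟨1, 0, 0, by simp⟩, ⟨0, 1, 0, by simp⟩, ⟨0, 0, 1, by simp⟩,
      ⟨-1, 0, 0, by simp⟩, ⟨0, -1, 0, by simp⟩, ⟨0, 0, -1, by simp⟩]
  · rintro ⟨a, b, c, h, rfl⟩
    have habs : AbsConvex ℝ (hexHull p q r) :=
      hexHull_eq_absConvexHull p q r ▸ absConvex_absConvexHull
    have hvert : ∀ i ∈ Finset.univ, ![p, q, r] i ∈ hexHull p q r := fun i _ =>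
      subset_convexHull ℝ _ (by fin_cases i <;> simp)
    simpa [Fin.sum_univ_three] using sum_smul_mem_of_absConvex habs
      ⟨_, hvert 0 (Finset.mem_univ _)⟩ hvert (a := ![a, b, c])
      (by simpa [Fin.sum_univ_three] using h)

theorem mem_hexHull_add_sub {u w q z : V} : z ∈ hexHull (u + w) q (u - w) ↔
    ∃ σ δ t : ℝ, |σ| ≤ 1 - |t| ∧ |δ| ≤ 1 - |t| ∧ z = σ • u + δ • w + t • q := by
  rw [mem_hexHull]
  constructor
  · rintro ⟨a, t, c, h, rfl⟩
    refine ⟨a + c, a - c, t, ?_, ?_, by module⟩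
    · linarith [abs_add_le a c]
    · linarith [abs_sub a c]
  · rintro ⟨σ, δ, t, hσ, hδ, rfl⟩
    refine ⟨(σ + δ) / 2, t, (σ - δ) / 2, ?_, by module⟩
    have hmax : |(σ + δ) / 2| + |(σ - δ) / 2| = max |σ| |δ| := by
      rcases max_cases |σ| |δ| with h | h <;> grind [abs_cases]
    linarith [max_le hσ hδ]

end HexHull

section Hausdorff

variable {V : Type*} [NormedAddCommGroup V] [NormedSpace ℝ V]

theorem hausdorffEDist_convexHull_le (s t : Set V) :
    hausdorffEDist (convexHull ℝ s) (convexHull ℝ t) ≤ hausdorffEDist s t := by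
  have key : ∀ s t : Set V, ∀ x ∈ convexHull ℝ s,
      infEDist x (convexHull ℝ t) ≤ hausdorffEDist s t := by
    intro s t x hx
    rcases eq_or_ne (hausdorffEDist s t) ⊤ with h | h
    · exact h ▸ le_top
    · have hsub : s ⊆ cthickening (hausdorffEDist s t).toReal (convexHull ℝ t) := fun y hy => by
        rw [mem_cthickening_iff, ENNReal.ofReal_toReal h]
        exact (infEDist_anti (subset_convexHull ℝ t)).trans (infEDist_le_hausdorffEDist_of_mem hy)
      have hx' := convexHull_min hsub ((convex_convexHull ℝ t).cthickening _) hx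
      rwa [mem_cthickening_iff, ENNReal.ofReal_toReal h] at hx'
  refine hausdorffEDist_le_of_infEDist (key s t) fun x hx => ?_
  rw [hausdorffEDist_comm]
  exact key t s x hx

theorem hausdorffEDist_range_le {ι α : Type*} [Fintype ι] [PseudoEMetricSpace α] (f g : ι → α) :
    hausdorffEDist (range f) (range g) ≤ edist f g := by
  rw [← iUnion_singleton_eq_range, ← iUnion_singleton_eq_range]
  refine hausdorffEDist_iUnion_le.trans (iSup_le fun i => ?_)
  simpa using edist_le_pi_edist f g i

theorem tendsto_hausdorffEDist_hexHull {ι : Type*} {l : Filter ι} {p q r : ι → V} {p' q' r' : V}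
    (hp : Tendsto p l (𝓝 p')) (hq : Tendsto q l (𝓝 q')) (hr : Tendsto r l (𝓝 r')) :
    Tendsto (fun i => hausdorffEDist (hexHull (p i) (q i) (r i)) (hexHull p' q' r')) l (𝓝 0) := by
  have hlim : Tendsto (fun i => ![p i, q i, r i, -p i, -q i, -r i]) l
      (𝓝 ![p', q', r', -p', -q', -r']) := by
    refine tendsto_pi_nhds.2 fun k => ?_
    fin_cases k
    exacts [hp, hq, hr, hp.neg, hq.neg, hr.neg]
  refine tendsto_of_tendsto_of_tendsto_of_le_of_le tendsto_const_nhds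
    (tendsto_iff_edist_tendsto_0.1 hlim) (fun i => zero_le) fun i => ?_
  rw [hexHull_eq_convexHull_range, hexHull_eq_convexHull_range]
  exact (hausdorffEDist_convexHull_le _ _).trans (hausdorffEDist_range_le _ _)

theorem isCompact_hexHull (p q r : V) : IsCompact (hexHull p q r) :=
  (Set.toFinite _).isCompact_convexHull ℝ

end Hausdorff

section AffineIsometry

variable {V W : Type*} [NormedAddCommGroup V] [InnerProductSpace ℝ V] [NormedAddCommGroup W]
  [InnerProductSpace ℝ W] (f : V ≃ᵃⁱ[ℝ] W)

theorem affineIsometryEquiv_apply (x : V) : f x = f.linearIsometryEquiv x + f 0 := by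
  simpa only [vadd_eq_add, add_zero] using f.map_vadd 0 x

theorem volume_image_affineIsometryEquiv [MeasurableSpace V] [BorelSpace V]
    [FiniteDimensional ℝ V] [MeasurableSpace W] [BorelSpace W] [FiniteDimensional ℝ W]
    (A : Set V) : volume (f '' A) = volume A := by
  have h : f '' A = (· + f 0) '' (f.linearIsometryEquiv '' A) := by
    rw [image_image]
    exact image_congr fun x _ => affineIsometryEquiv_apply f x
  rw [h, image_add_right, measure_preimage_add_right, ← MeasurePreserving.measure_preimage_equiv
    (f := f.linearIsometryEquiv.toMeasurableEquiv) f.linearIsometryEquiv.measurePreserving]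
  exact congr_arg volume (preimage_image_eq A f.linearIsometryEquiv.injective)

end AffineIsometry

section Symmetrization

/-- The slice of `A` at height `t`, as a set of real parts. -/
def slice (A : Set ℂ) (t : ℝ) : Set ℝ := {s | (⟨s, t⟩ : ℂ) ∈ A}

/-- The Steiner symmetrization of a subset of `ℂ` with respect to the imaginary axis. Every
Steiner symmetrization of the plane is an isometric copy of this one, see `steiner_image`. -/
def symmetrization (A : Set ℂ) : Set ℂ :=
  {z | (slice A z.im).Nonempty ∧ ENNReal.ofReal (2 * |z.re|) ≤ volume (slice A z.im)}

theorem isometry_complex_mk (t : ℝ) : Isometry fun s : ℝ => (⟨s, t⟩ : ℂ) :=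
  Isometry.of_dist_eq fun _ _ => Complex.dist_of_im_eq rfl

variable (f : ℂ ≃ᵃⁱ[ℝ] E2)

theorem map_mk_zero_add (r t : ℝ) : f ⟨0, t⟩ + r • f.linearIsometryEquiv 1 = f ⟨r, t⟩ := by
  have h : (⟨r, t⟩ : ℂ) = ⟨0, t⟩ + r • 1 := Complex.ext (by simp) (by simp)
  rw [affineIsometryEquiv_apply f ⟨r, t⟩, h, map_add, map_smul, affineIsometryEquiv_apply f ⟨0, t⟩]
  abel

theorem inner_map_one (z : ℂ) : ⟪f z, f.linearIsometryEquiv 1⟫ =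
    ⟪f 0, f.linearIsometryEquiv 1⟫ + z.re := by
  rw [affineIsometryEquiv_apply, inner_add_left, LinearIsometryEquiv.inner_map_map, add_comm,
    Complex.inner]
  simp

theorem image_inter_lineThrough (A : Set ℂ) (t : ℝ) :
    f '' A ∩ lineThrough (f ⟨0, t⟩) (f.linearIsometryEquiv 1) =
      (fun s : ℝ => f ⟨s, t⟩) '' slice A t := by
  have hline : lineThrough (f ⟨0, t⟩) (f.linearIsometryEquiv 1) =
      range fun s : ℝ => f ⟨s, t⟩ := by
    ext y
    simp only [lineThrough, map_mk_zero_add, mem_ofPred_eq, mem_range, eq_comm (a := y)]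
  rw [hline, inter_comm, ← image_preimage_eq_range_inter]
  simp [slice, preimage, f.injective.eq_iff]

theorem hausdorffMeasure_image_inter_lineThrough (A : Set ℂ) (t : ℝ) :
    μH[1] (f '' A ∩ lineThrough (f ⟨0, t⟩) (f.linearIsometryEquiv 1)) = volume (slice A t) := by
  rw [image_inter_lineThrough, ← hausdorffMeasure_real]
  exact (f.isometry.comp (isometry_complex_mk t)).hausdorffMeasure_image (Or.inl zero_le_one) _

theorem steiner_image (A : Set ℂ) :
    steiner (f.linearIsometryEquiv 1) ⟪f 0, f.linearIsometryEquiv 1⟫ (f '' A) =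
      f '' symmetrization A := by
  ext y
  constructor
  · rintro ⟨x, hx, hne, r, rfl, hr⟩
    obtain ⟨⟨s, t⟩, rfl⟩ := f.surjective x
    obtain rfl : s = 0 := by simpa [inner_map_one f ⟨s, t⟩] using hx
    rw [image_inter_lineThrough, image_nonempty] at hne
    rw [hausdorffMeasure_image_inter_lineThrough] at hr
    exact ⟨⟨r, t⟩, ⟨hne, hr⟩, (map_mk_zero_add f r t).symm⟩
  · rintro ⟨⟨r, t⟩, ⟨hne, hr⟩, rfl⟩
    refine ⟨f ⟨0, t⟩, by simp [inner_map_one f ⟨0, t⟩], ?_, r, ?_, ?_⟩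
    · rwa [image_inter_lineThrough, image_nonempty]
    · exact (map_mk_zero_add f r t).symm
    · rwa [hausdorffMeasure_image_inter_lineThrough]

theorem volume_eq_lintegral_slice {A : Set ℂ} (hA : MeasurableSet A) :
    volume A = ∫⁻ t, volume (slice A t) := by
  rw [← Complex.volume_preserving_equiv_real_prod.symm.measure_preimage_equiv,
    Measure.volume_eq_prod,
    Measure.prod_apply_symm (Complex.measurableEquivRealProd.symm.measurable hA)]
  rfl

end Symmetrization

section ChordSet

variable {h : ℝ} {m L : ℝ → ℝ}

/-- The set whose horizontal slice at height `t ∈ [-h, h]` is the interval with midpoint `m t` and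
half-length `L t`. -/
def chordSet (h : ℝ) (m L : ℝ → ℝ) : Set ℂ := {z | |z.im| ≤ h ∧ |z.re - m z.im| ≤ L z.im}

theorem slice_chordSet {t : ℝ} (ht : |t| ≤ h) :
    slice (chordSet h m L) t = Icc (m t - L t) (m t + L t) := by
  ext s
  simp only [slice, chordSet, mem_ofPred_eq, ht, true_and, ← Real.closedBall_eq_Icc,
    mem_closedBall, Real.dist_eq]

theorem slice_chordSet_of_lt {t : ℝ} (ht : h < |t|) : slice (chordSet h m L) t = ∅ := by
  ext s
  simp [slice, chordSet, ht.not_ge]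

theorem volume_slice_chordSet (t : ℝ) : volume (slice (chordSet h m L) t) =
    (Icc (-h) h).indicator (fun t => ENNReal.ofReal (2 * L t)) t := by
  rcases le_or_gt |t| h with ht | ht
  · rw [slice_chordSet ht, Real.volume_Icc, indicator_of_mem (mem_Icc.2 (abs_le.1 ht))]
    ring_nf
  · rw [slice_chordSet_of_lt ht, indicator_of_notMem fun h' => ht.not_ge (abs_le.2 (mem_Icc.1 h')),
      measure_empty]

theorem symmetrization_chordSet (hL : ∀ t, |t| ≤ h → 0 ≤ L t) :
    symmetrization (chordSet h m L) = chordSet h 0 L := by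
  ext z
  rw [symmetrization, mem_ofPred_eq, volume_slice_chordSet]
  rcases le_or_gt |z.im| h with hz | hz
  · have hLz := hL z.im hz
    rw [slice_chordSet hz, nonempty_Icc, indicator_of_mem (mem_Icc.2 (abs_le.1 hz)),
      ENNReal.ofReal_le_ofReal_iff (mul_nonneg zero_le_two hLz), mul_le_mul_iff_right₀ two_pos]
    simp only [chordSet, mem_ofPred_eq, hz, true_and, Pi.zero_apply, sub_zero]
    exact and_iff_right (by linarith)
  · rw [slice_chordSet_of_lt hz]
    simp [chordSet, hz.not_ge]

theorem volume_chordSet (hm : Measurable m) (hLc : Continuous L) (hh : 0 ≤ h)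
    (hL : ∀ t, |t| ≤ h → 0 ≤ L t) :
    volume (chordSet h m L) = ENNReal.ofReal (2 * ∫ t in -h..h, L t) := by
  have hmeas : MeasurableSet (chordSet h m L) := by
    unfold chordSet
    measurability
  simp_rw [volume_eq_lintegral_slice hmeas, volume_slice_chordSet]
  rw [lintegral_indicator measurableSet_Icc, intervalIntegral.integral_of_le (neg_le_self hh),
    ← integral_Icc_eq_integral_Ioc, ← integral_const_mul]
  refine (ofReal_integral_eq_lintegral_ofReal
    (Continuous.integrableOn_Icc (by fun_prop)) ?_).symm
  filter_upwards [ae_restrict_mem measurableSet_Icc] with t ht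
  exact mul_nonneg zero_le_two (hL t (abs_le.2 ht))

theorem intervalIntegral_comp_abs {g : ℝ → ℝ} (hg : Continuous g) (hh : 0 ≤ h) :
    ∫ t in -h..h, g |t| = 2 * ∫ t in 0..h, g t := by
  have hint (a b : ℝ) : IntervalIntegrable (fun t => g |t|) volume a b :=
    (hg.comp continuous_abs).intervalIntegrable a b
  have hpos : ∫ t in 0..h, g |t| = ∫ t in 0..h, g t :=
    intervalIntegral.integral_congr fun t ht => by
      rw [uIcc_of_le hh] at ht
      simp only [abs_of_nonneg ht.1]
  have hneg : ∫ t in -h..0, g |t| = ∫ t in 0..h, g |t| := by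
    simpa using (intervalIntegral.integral_comp_neg (fun t => g |t|) (a := -h) (b := 0))
  rw [← intervalIntegral.integral_add_adjacent_intervals (hint _ 0) (hint 0 _), hneg, hpos, two_mul]

end ChordSet

section SoftThreshold

/-- The odd piecewise linear function of `t ∈ [-h, h]` vanishing on `[-b, b]` and equal to `±1`
at `±h`. In a hexagon `hexHull (u + a) q (u - a)` with `u.im = b` and `q.im = h`, it is the
coefficient of `q` in the midpoint of the chord at height `t`. For `b = h` the division by zero
correctly returns `0`. -/
def softThreshold (b h t : ℝ) : ℝ := (t - max (-b) (min t b)) / (h - b)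

variable {b h t : ℝ}

theorem continuous_softThreshold : Continuous (softThreshold b h) := by
  unfold softThreshold
  fun_prop

theorem softThreshold_of_abs_le (ht : |t| ≤ b) : softThreshold b h t = 0 := by
  rw [softThreshold, min_eq_left (abs_le.1 ht).2, max_eq_right (abs_le.1 ht).1, sub_self, zero_div]

theorem softThreshold_of_le (hb : 0 ≤ b) (ht : b ≤ t) :
    softThreshold b h t = (t - b) / (h - b) := by
  rw [softThreshold, min_eq_right ht, max_eq_right (by linarith)]

theorem softThreshold_neg (hb : 0 ≤ b) : softThreshold b h (-t) = -softThreshold b h t := by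
  have hclip : max (-b) (min (-t) b) = -max (-b) (min t b) := by grind
  rw [softThreshold, softThreshold, hclip]
  ring

theorem abs_softThreshold (hb : 0 ≤ b) (hbh : b ≤ h) :
    |softThreshold b h t| = softThreshold b h |t| := by
  have key : ∀ t, 0 ≤ t → 0 ≤ softThreshold b h t := fun t ht => by
    have h1 : max (-b) (min t b) ≤ t := max_le (by linarith) (min_le_left t b)
    exact div_nonneg (by linarith) (sub_nonneg.2 hbh)
  rcases le_total 0 t with ht | ht
  · rw [abs_of_nonneg ht, abs_of_nonneg (key t ht)]
  · rw [abs_of_nonpos ht, ← abs_of_nonneg (key (-t) (by linarith)), softThreshold_neg hb, abs_neg]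

theorem softThreshold_cases (hb : 0 ≤ b) (ht : |t| ≤ h) :
    softThreshold b h t = 0 ∧ |t| ≤ b ∨
      0 ≤ softThreshold b h t ∧ t = b + softThreshold b h t * (h - b) ∨
      softThreshold b h t ≤ 0 ∧ t = -b + softThreshold b h t * (h - b) := by
  have key : ∀ t, b < t → t ≤ h →
      0 ≤ softThreshold b h t ∧ t = b + softThreshold b h t * (h - b) := fun t hbt hth => by
    rw [softThreshold_of_le hb hbt.le, div_mul_cancel₀ _ (by linarith)]
    exact ⟨div_nonneg (by linarith) (by linarith), by ring⟩
  rcases le_or_gt |t| b with h0 | h0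
  · exact Or.inl ⟨softThreshold_of_abs_le h0, h0⟩
  rcases lt_abs.1 h0 with hpos | hneg
  · exact Or.inr (Or.inl (key t hpos (le_of_abs_le ht)))
  · have := key (-t) hneg (by linarith [(abs_le.1 ht).1])
    rw [softThreshold_neg hb] at this
    exact Or.inr (Or.inr ⟨by linarith, by linarith⟩)

theorem abs_softThreshold_le_one (hb : 0 ≤ b) (hbh : b ≤ h) (ht : |t| ≤ h) :
    |softThreshold b h t| ≤ 1 := by
  rw [abs_softThreshold hb hbh, softThreshold]
  refine div_le_one_of_le₀ ?_ (sub_nonneg.2 hbh)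
  rcases le_total |t| b with h' | h' <;> grind

theorem abs_sub_softThreshold_mul_le (hb : 0 ≤ b) (hbh : b ≤ h) (ht : |t| ≤ h) :
    |t - softThreshold b h t * h| ≤ (1 - |softThreshold b h t|) * b := by
  have h1 := abs_softThreshold_le_one hb hbh ht
  rcases softThreshold_cases hb ht with ⟨h0, hle⟩ | ⟨hs, hle⟩ | ⟨hs, hle⟩
  · simpa [h0] using hle
  · rw [abs_of_nonneg hs] at h1 ⊢
    rw [abs_le]
    constructor <;> nlinarith
  · rw [abs_of_nonpos hs] at h1 ⊢
    rw [abs_le]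
    constructor <;> nlinarith

/-- The hypothesis on `s` says that some point of the hexagon at height `t` has `q`-coefficient `s`;
the soft threshold is the smallest such coefficient. -/
theorem abs_sub_softThreshold_add_le (hb : 0 < b) (hbh : b ≤ h) {s : ℝ}
    (hs : |t - s * h| ≤ (1 - |s|) * b) :
    |t| ≤ h ∧ |s - softThreshold b h t| + |softThreshold b h t| ≤ |s| := by
  have hs1 : |s| ≤ 1 := by nlinarith [abs_nonneg (t - s * h)]
  have hth : |t| ≤ h := by
    have h1 := abs_add_le (t - s * h) (s * h)
    rw [sub_add_cancel, abs_mul, abs_of_pos (hb.trans_le hbh)] at h1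
    nlinarith
  refine ⟨hth, ?_⟩
  rcases hbh.eq_or_lt with rfl | hlt
  · simp [softThreshold_of_abs_le hth]
  have key : ∀ s x : ℝ, 0 ≤ x → x * (h - b) ≤ s * h - |s| * b → x ≤ s := fun s x hx0 hx => by
    rcases le_total 0 s with h0 | h0
    · rw [abs_of_nonneg h0] at hx
      nlinarith
    · rw [abs_of_nonpos h0] at hx
      nlinarith [hx0]
  rcases softThreshold_cases hb.le hth with ⟨h0, -⟩ | ⟨h0, ht⟩ | ⟨h0, ht⟩
  · simp [h0]
  · have hle := key s _ h0 (by linarith [le_of_abs_le hs])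
    rw [abs_of_nonneg h0, abs_of_nonneg (sub_nonneg.2 hle), sub_add_cancel]
    exact le_abs_self s
  · have hle := neg_le_neg_iff.1 <| key (-s) (-softThreshold b h t) (neg_nonneg.2 h0)
      (by rw [abs_neg]; linarith [(abs_le.1 hs).1])
    rw [abs_of_nonpos h0, abs_of_nonpos (sub_nonpos.2 hle), abs_of_nonpos (hle.trans h0)]
    linarith

end SoftThreshold

section HorizontalHexagon

variable {a b h k β : ℝ}

theorem hexHull_horizontal_eq_chordSet (ha : 0 < a) (hb : 0 < b) (hbh : b ≤ h) (hβ : |β| ≤ a) :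
    hexHull (⟨k * b + a, b⟩ : ℂ) ⟨k * h + β, h⟩ ⟨k * b - a, b⟩ = chordSet h
      (fun t => k * t + softThreshold b h t * β) (fun t => a * (1 - |softThreshold b h t|)) := by
  have hu : hexHull (⟨k * b + a, b⟩ : ℂ) ⟨k * h + β, h⟩ ⟨k * b - a, b⟩ =
      hexHull (⟨k * b, b⟩ + (a : ℂ)) ⟨k * h + β, h⟩ (⟨k * b, b⟩ - (a : ℂ)) := by
    congr 1 <;> apply Complex.ext <;> simp
  ext z
  rw [hu, mem_hexHull_add_sub]
  constructor
  · rintro ⟨σ, δ, s, hσ, hδ, rfl⟩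
    have hσb : |σ * b + s * h - s * h| ≤ (1 - |s|) * b := by
      rw [add_sub_cancel_right, abs_mul, abs_of_pos hb]
      gcongr
    obtain ⟨hth, hτ⟩ := abs_sub_softThreshold_add_le hb hbh hσb
    set τ := softThreshold b h (σ * b + s * h) with hτ_def
    have hmid : |δ * a + (s - τ) * β| ≤ a * (1 - |τ|) := calc
      |δ * a + (s - τ) * β| ≤ |δ| * a + |s - τ| * |β| := by
        simpa only [abs_mul, abs_of_pos ha] using abs_add_le (δ * a) ((s - τ) * β)
      _ ≤ (1 - |s|) * a + |s - τ| * a := by gcongr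
      _ ≤ a * (1 - |τ|) := by nlinarith
    simp only [chordSet, mem_ofPred_eq, Complex.add_im, Complex.add_re, Complex.smul_im,
      Complex.smul_re, smul_eq_mul, Complex.ofReal_re, Complex.ofReal_im, mul_zero, add_zero,
      ← hτ_def]
    refine ⟨hth, ?_⟩
    ring_nf at hmid ⊢
    exact hmid
  · rintro ⟨hz, hzre⟩
    set τ := softThreshold b h z.im
    refine ⟨(z.im - τ * h) / b, (z.re - (k * z.im + τ * β)) / a, τ, ?_, ?_, ?_⟩
    · rw [abs_div, abs_of_pos hb, div_le_iff₀ hb]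
      exact abs_sub_softThreshold_mul_le hb.le hbh hz
    · rw [abs_div, abs_of_pos ha, div_le_iff₀' ha]
      exact hzre
    · apply Complex.ext
      · simp only [Complex.add_re, Complex.smul_re, smul_eq_mul, Complex.ofReal_re]
        field_simp
        ring
      · simp only [Complex.add_im, Complex.smul_im, smul_eq_mul, Complex.ofReal_im]
        field_simp
        ring

theorem symmetrization_hexHull_horizontal (ha : 0 < a) (hb : 0 < b) (hbh : b ≤ h) (hβ : |β| ≤ a) :
    symmetrization (hexHull (⟨k * b + a, b⟩ : ℂ) ⟨k * h + β, h⟩ ⟨k * b - a, b⟩) =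
      hexHull ⟨a, b⟩ ⟨0, h⟩ ⟨-a, b⟩ := by
  have hstd := hexHull_horizontal_eq_chordSet (k := 0) (β := 0) ha hb hbh (abs_zero.trans_le ha.le)
  simp only [zero_mul, zero_add, mul_zero, zero_sub, add_zero] at hstd
  rw [hexHull_horizontal_eq_chordSet ha hb hbh hβ, hstd, symmetrization_chordSet]
  · rfl
  · exact fun t ht => mul_nonneg ha.le (sub_nonneg.2 (abs_softThreshold_le_one hb.le hbh ht))

theorem integral_softThreshold (hb : 0 ≤ b) (hbh : b ≤ h) :
    ∫ t in 0..h, softThreshold b h t = (h - b) / 2 := by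
  have hint (x y : ℝ) : IntervalIntegrable (softThreshold b h) volume x y :=
    continuous_softThreshold.intervalIntegrable x y
  have hzero : ∫ t in 0..b, softThreshold b h t = 0 := by
    rw [intervalIntegral.integral_congr (g := fun _ => 0), intervalIntegral.integral_zero]
    intro t ht
    rw [uIcc_of_le hb] at ht
    exact softThreshold_of_abs_le (abs_le.2 ⟨by linarith [ht.1], ht.2⟩)
  have hramp : ∫ t in b..h, softThreshold b h t = ∫ t in b..h, (t - b) / (h - b) :=
    intervalIntegral.integral_congr fun t ht => by
      rw [uIcc_of_le hbh] at ht
      exact softThreshold_of_le hb ht.1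
  rw [← intervalIntegral.integral_add_adjacent_intervals (hint 0 b) (hint b h), hzero, hramp]
  rcases hbh.eq_or_lt with rfl | hlt
  · simp
  · have : h - b ≠ 0 := by linarith
    rw [intervalIntegral.integral_div,
      intervalIntegral.integral_comp_sub_right (fun t => t), integral_id]
    field_simp
    ring

theorem volume_hexHull_horizontal (ha : 0 < a) (hb : 0 < b) (hbh : b ≤ h) (hβ : |β| ≤ a) :
    volume (hexHull (⟨k * b + a, b⟩ : ℂ) ⟨k * h + β, h⟩ ⟨k * b - a, b⟩) =
      ENNReal.ofReal (2 * a * (b + h)) := by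
  have hcont := continuous_softThreshold (b := b) (h := h)
  rw [hexHull_horizontal_eq_chordSet ha hb hbh hβ, volume_chordSet (by fun_prop) (by fun_prop)
    (hb.le.trans hbh) fun t ht =>
      mul_nonneg ha.le (sub_nonneg.2 (abs_softThreshold_le_one hb.le hbh ht))]
  simp_rw [abs_softThreshold hb.le hbh]
  rw [intervalIntegral_comp_abs (g := fun t => a * (1 - softThreshold b h t)) (by fun_prop)
    (hb.le.trans hbh), intervalIntegral.integral_const_mul,
    intervalIntegral.integral_sub intervalIntegrable_const (hcont.intervalIntegrable _ _),
    integral_softThreshold hb.le hbh, intervalIntegral.integral_const, smul_eq_mul]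
  ring_nf

end HorizontalHexagon

attribute [local instance] Complex.finrank_real_complex_fact

local notation "ω" => Complex.orientation.areaForm

section ConvexHexagon

theorem areaForm_eq (z w : ℂ) : ω z w = z.re * w.im - z.im * w.re := by
  rw [Complex.areaForm, Complex.mul_im, Complex.conj_re, Complex.conj_im]
  ring

theorem areaForm_mul_mul (c z w : ℂ) : ω (c * z) (c * w) = ‖c‖ ^ 2 * ω z w := by
  simp only [areaForm_eq, Complex.mul_re, Complex.mul_im, Complex.sq_norm, Complex.normSq_apply]
  ring

/-- The points `p, q, r, -p, -q, -r` are the consecutive vertices, in counterclockwise order, of a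
convex hexagon, possibly with straight angles. The triangle inequalities say that the polygon does
not turn right at its vertices. -/
structure ConvexTriple (p q r : ℂ) : Prop where
  pos_left : 0 < ω p q
  pos_right : 0 < ω q r
  pos_outer : 0 < ω p r
  outer_le : ω p r ≤ ω p q + ω q r
  left_le : ω p q ≤ ω q r + ω p r
  right_le : ω q r ≤ ω p q + ω p r

namespace ConvexTriple

variable {p q r : ℂ}

theorem rotate (h : ConvexTriple p q r) : ConvexTriple q r (-p) := by
  have hrp : ω r (-p) = ω p r := by rw [map_neg, ← Orientation.areaForm_swap]
  have hqp : ω q (-p) = ω p q := by rw [map_neg, ← Orientation.areaForm_swap]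
  exact ⟨h.pos_right, hrp ▸ h.pos_outer, hqp ▸ h.pos_left, by linarith [h.left_le],
    by linarith [h.right_le], by linarith [h.outer_le]⟩

theorem mul (h : ConvexTriple p q r) {c : ℂ} (hc : c ≠ 0) :
    ConvexTriple (c * p) (c * q) (c * r) := by
  have hc' : 0 < ‖c‖ ^ 2 := by positivity
  constructor <;> simp only [areaForm_mul_mul, ← mul_add, mul_pos_iff_of_pos_left hc',
    mul_le_mul_iff_right₀ hc', h.pos_left, h.pos_right, h.pos_outer, h.outer_le, h.left_le,
    h.right_le]

theorem sub_ne_zero (h : ConvexTriple p q r) : p - r ≠ 0 := fun hpr => by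
  simpa [sub_eq_zero.1 hpr] using h.pos_outer

theorem exists_eq_of_sub_eq (h : ConvexTriple p q r) {a : ℝ} (ha : 0 < a)
    (hd : p - r = (2 * a : ℝ)) : ∃ b h k β : ℝ, 0 < b ∧ b ≤ h ∧ |β| ≤ a ∧
      p = ⟨k * b + a, b⟩ ∧ q = ⟨k * h + β, h⟩ ∧ r = ⟨k * b - a, b⟩ := by
  obtain rfl : p = r + (2 * a : ℝ) := by rw [← hd, add_sub_cancel]
  obtain ⟨-, -, hC, hCAB, hABC, hBAC⟩ := h
  simp only [areaForm_eq, Complex.add_re, Complex.add_im, Complex.ofReal_re, Complex.ofReal_im,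
    add_zero] at hC hCAB hABC hBAC
  have hb : 0 < r.im := by nlinarith
  refine ⟨r.im, q.im, (r.re + a) / r.im, q.re - (r.re + a) / r.im * q.im, hb, by nlinarith,
    ?_, ?_, ?_, ?_⟩
  · have : q.re - (r.re + a) / r.im * q.im = (q.re * r.im - (r.re + a) * q.im) / r.im := by
      field_simp
    rw [this, abs_div, abs_of_pos hb, div_le_iff₀ hb, abs_le]
    constructor <;> linarith
  · apply Complex.ext
    · rw [Complex.add_re, Complex.ofReal_re, div_mul_cancel₀ _ hb.ne']
      ring
    · simp
  · apply Complex.ext <;> simp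
  · apply Complex.ext <;> simp [hb.ne']

theorem exists_eq_circle_mul (h : ConvexTriple p q r) :
    ∃ (c : Circle) (a b h k β : ℝ), 0 < a ∧ 0 < b ∧ b ≤ h ∧ |β| ≤ a ∧
      p = c * ⟨k * b + a, b⟩ ∧ q = c * ⟨k * h + β, h⟩ ∧ r = c * ⟨k * b - a, b⟩ := by
  have ha : 0 < ‖p - r‖ / 2 := half_pos (norm_pos_iff.2 h.sub_ne_zero)
  set c := Circle.exp (p - r).arg
  have hd : p - r = c * (2 * (‖p - r‖ / 2) : ℝ) := by
    rw [mul_div_cancel₀ _ two_ne_zero, mul_comm, Circle.coe_exp, Complex.norm_mul_exp_arg_mul_I]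
  have hdiv : (c : ℂ)⁻¹ * p - (c : ℂ)⁻¹ * r = (2 * (‖p - r‖ / 2) : ℝ) := by
    rw [← mul_sub, hd, inv_mul_cancel_left₀ c.coe_ne_zero, ← hd]
  obtain ⟨b, h', k, β, hb, hbh, hβ, hp, hq, hr⟩ :=
    (h.mul (inv_ne_zero c.coe_ne_zero)).exists_eq_of_sub_eq ha hdiv
  refine ⟨c, ‖p - r‖ / 2, b, h', k, β, ha, hb, hbh, hβ, ?_, ?_, ?_⟩
  exacts [by rw [← hp, mul_inv_cancel_left₀ c.coe_ne_zero],
    by rw [← hq, mul_inv_cancel_left₀ c.coe_ne_zero],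
    by rw [← hr, mul_inv_cancel_left₀ c.coe_ne_zero]]

end ConvexTriple

/-- The hexagon symmetric about the line `ℝ i d` and about the origin, with one side equal to `d`
and with vertices at heights `y` and `z` above the line `ℝ d`, in units of `‖d‖`. -/
def symHex (d : ℂ) (y z : ℝ) : Set ℂ :=
  hexHull (d * ⟨1 / 2, y⟩) (d * ⟨0, z⟩) (d * ⟨-1 / 2, y⟩)

theorem symHex_circle_mul (c : Circle) {a : ℝ} (ha : a ≠ 0) (b h : ℝ) :
    symHex (c * (2 * a : ℝ)) (b / (2 * a)) (h / (2 * a)) =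
      rotation c '' hexHull ⟨a, b⟩ ⟨0, h⟩ ⟨-a, b⟩ := by
  have ha' : (a : ℂ) ≠ 0 := by exact_mod_cast ha
  simp only [image_hexHull, rotation_apply, Complex.mk_eq_add_mul_I, symHex]
  push_cast
  congr 1 <;> field_simp
  ring

theorem areaForm_circle_mul (c : Circle) (z w : ℂ) : ω (c * z) (c * w) = ω z w := by
  rw [areaForm_mul_mul, Circle.norm_coe, one_pow, one_mul]

namespace ConvexTriple

variable {p q r : ℂ}

theorem exists_steiner (hpqr : ConvexTriple p q r) (f : ℂ ≃ᵃⁱ[ℝ] E2) :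
    ∃ (v : E2) (e : ℝ), ‖v‖ = 1 ∧ steiner v e (f '' hexHull p q r) =
      f '' symHex (p - r) (ω p r / ‖p - r‖ ^ 2) ((ω p q + ω q r) / ‖p - r‖ ^ 2) := by
  obtain ⟨c, a, b, h, k, β, ha, hb, hbh, hβ, rfl, rfl, rfl⟩ := hpqr.exists_eq_circle_mul
  have hd : c * (⟨k * b + a, b⟩ : ℂ) - c * ⟨k * b - a, b⟩ = c * (2 * a : ℝ) := by
    rw [← mul_sub]
    congr 1
    apply Complex.ext
    · rw [Complex.sub_re, Complex.ofReal_re, add_sub_sub_cancel, two_mul]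
    · simp
  have hnorm : ‖c * ((2 * a : ℝ) : ℂ)‖ = 2 * a := by
    rw [norm_mul, Circle.norm_coe, one_mul, Complex.norm_of_nonneg (by positivity)]
  have hy : ω (⟨k * b + a, b⟩ : ℂ) ⟨k * b - a, b⟩ / (2 * a) ^ 2 = b / (2 * a) := by
    rw [areaForm_eq]
    field_simp
    ring
  have hz : (ω (⟨k * b + a, b⟩ : ℂ) ⟨k * h + β, h⟩ +
      ω (⟨k * h + β, h⟩ : ℂ) ⟨k * b - a, b⟩) / (2 * a) ^ 2 = h / (2 * a) := by
    rw [areaForm_eq, areaForm_eq]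
    field_simp
    ring
  have himage (A : Set ℂ) : f '' (rotation c '' A) =
      (rotation c).toAffineIsometryEquiv.trans f '' A := image_image _ _ _
  have hrot := steiner_image ((rotation c).toAffineIsometryEquiv.trans f)
    (hexHull ⟨k * b + a, b⟩ ⟨k * h + β, h⟩ ⟨k * b - a, b⟩)
  rw [symmetrization_hexHull_horizontal ha hb hbh hβ, ← himage, ← himage,
    ← symHex_circle_mul c ha.ne', image_hexHull] at hrot
  simp only [areaForm_circle_mul, hd, hnorm, hy, hz]
  exact ⟨_, _, by rw [LinearIsometryEquiv.norm_map, norm_one], hrot⟩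

theorem volume_hexHull (hpqr : ConvexTriple p q r) :
    volume (hexHull p q r) = ENNReal.ofReal (ω p q + ω q r + ω p r) := by
  obtain ⟨c, a, b, h, k, β, ha, hb, hbh, hβ, rfl, rfl, rfl⟩ := hpqr.exists_eq_circle_mul
  simp only [areaForm_circle_mul]
  rw [← rotation_apply, ← rotation_apply, ← rotation_apply, ← image_hexHull,
    ← LinearIsometryEquiv.coe_toAffineIsometryEquiv, volume_image_affineIsometryEquiv,
    volume_hexHull_horizontal ha hb hbh hβ]
  simp only [areaForm_eq]
  ring_nf

end ConvexTriple

end ConvexHexagon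

section Existence

variable {p q r : ℂ}

theorem areaForm_smul_add_smul (p q r : ℂ) : ω q r • p + ω p q • r = ω p r • q := by
  apply Complex.ext <;> simp only [areaForm_eq, Complex.add_re, Complex.add_im, Complex.smul_re,
    Complex.smul_im, smul_eq_mul] <;> ring

theorem exists_areaForm_ne_zero {s : Set ℂ} (hs : (interior s).Nonempty) :
    ∃ x ∈ s, ∃ y ∈ s, ω x y ≠ 0 := by
  obtain ⟨x, hx⟩ := hs
  obtain ⟨ε, hε, hball⟩ := Metric.mem_nhds_iff.1 (mem_interior_iff_mem_nhds.1 hx)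
  have hmem (w : ℂ) (hw : ‖w‖ = 1) : x + (ε / 2) • w ∈ s := hball <| by
    simpa [mem_ball_iff_norm, norm_smul, hw, abs_of_pos hε] using half_lt_self hε
  by_contra! hzero
  have h1 := hzero x (interior_subset hx) _ (hmem 1 norm_one)
  have hI := hzero x (interior_subset hx) _ (hmem Complex.I Complex.norm_I)
  have h1I := hzero _ (hmem 1 norm_one) _ (hmem Complex.I Complex.norm_I)
  simp only [areaForm_eq, Complex.add_re, Complex.add_im, Complex.smul_re, Complex.smul_im,
    Complex.one_re, Complex.one_im, Complex.I_re, Complex.I_im, smul_eq_mul, mul_one, mul_zero,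
    add_zero] at h1 hI h1I
  nlinarith

theorem areaForm_ne_zero_of_interior_hexHull (h : (interior (hexHull p q r)).Nonempty) :
    ω p q ≠ 0 ∨ ω q r ≠ 0 ∨ ω p r ≠ 0 := by
  obtain ⟨x, hx, y, hy, hxy⟩ := exists_areaForm_ne_zero h
  obtain ⟨a, b, c, -, rfl⟩ := mem_hexHull.1 hx
  obtain ⟨a', b', c', -, rfl⟩ := mem_hexHull.1 hy
  by_contra! hzero
  obtain ⟨hpq, hqr, hpr⟩ := hzero
  have hbilin : ω (a • p + b • q + c • r) (a' • p + b' • q + c' • r) =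
      (a * b' - b * a') * ω p q + (b * c' - c * b') * ω q r + (a * c' - c * a') * ω p r := by
    simp only [areaForm_eq, Complex.add_re, Complex.add_im, Complex.smul_re, Complex.smul_im,
      smul_eq_mul]
    ring
  exact hxy (by rw [hbilin, hpq, hqr, hpr]; ring)

theorem exists_hexHull_eq_areaForm_nonneg (p q r : ℂ) :
    ∃ p' q' r' : ℂ, hexHull p' q' r' = hexHull p q r ∧
      0 ≤ ω p' q' ∧ 0 ≤ ω q' r' ∧ 0 ≤ ω p' r' := by
  have hflip (p q r : ℂ) : ∃ r', hexHull p q r' = hexHull p q r ∧ 0 ≤ ω p r' := by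
    rcases le_total 0 (ω p r) with h | h
    · exact ⟨r, rfl, h⟩
    · exact ⟨-r, hexHull_neg_right p q r, by rwa [map_neg, neg_nonneg]⟩
  obtain ⟨r', hr', hpr⟩ := hflip p q r
  obtain ⟨q', hq', hpq⟩ := hflip p r' q
  rw [hexHull_swap_right p q, hr'] at hq'
  rcases le_total 0 (ω q' r') with h | h
  · exact ⟨p, q', r', by rw [hexHull_swap_right, hq'], hpq, h, hpr⟩
  · exact ⟨p, r', q', hq', hpr, by rwa [Orientation.areaForm_swap, neg_nonneg], hpq⟩

theorem exists_hexHull_eq_areaForm_le (p q r : ℂ) :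
    ∃ p' q' r' : ℂ, hexHull p' q' r' = hexHull p q r ∧
      0 ≤ ω p' q' ∧ 0 ≤ ω q' r' ∧ ω p' q' ≤ ω p' r' ∧ ω q' r' ≤ ω p' r' := by
  obtain ⟨p', q', r', heq, hpq, hqr, hpr⟩ := exists_hexHull_eq_areaForm_nonneg p q r
  have hneg (x y : ℂ) : ω x (-y) = ω y x := by rw [map_neg, ← Orientation.areaForm_swap]
  by_cases hC : ω p' q' ≤ ω p' r' ∧ ω q' r' ≤ ω p' r'
  · exact ⟨p', q', r', heq, hpq, hqr, hC⟩
  by_cases hA : ω q' r' ≤ ω p' q' ∧ ω p' r' ≤ ω p' q'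
  · refine ⟨q', r', -p', (hexHull_rotate p' q' r').trans heq, ?_⟩
    simpa only [hneg] using ⟨hqr, hpr, hA⟩
  · refine ⟨r', -p', -q', ((hexHull_rotate q' r' _).trans (hexHull_rotate p' q' r')).trans heq, ?_⟩
    simp only [hneg, map_neg, LinearMap.neg_apply, neg_neg]
    grind

theorem convexTriple_midpoint (hpr : 0 < ω p r) : ConvexTriple p (midpoint ℝ p r) r := by
  have hleft : ω p (midpoint ℝ p r) = ω p r / 2 := by
    simp only [midpoint_eq_smul_add, invOf_eq_inv, areaForm_eq, Complex.smul_re, Complex.smul_im,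
      Complex.add_re, Complex.add_im, smul_eq_mul]
    ring
  have hright : ω (midpoint ℝ p r) r = ω p r / 2 := by
    simp only [midpoint_eq_smul_add, invOf_eq_inv, areaForm_eq, Complex.smul_re, Complex.smul_im,
      Complex.add_re, Complex.add_im, smul_eq_mul]
    ring
  constructor <;> linarith

theorem hexHull_midpoint (hpq : 0 ≤ ω p q) (hqr : 0 ≤ ω q r) (hpr : 0 < ω p r)
    (hadd : ω p q + ω q r ≤ ω p r) : hexHull p (midpoint ℝ p r) r = hexHull p q r := by
  have hp (m : ℂ) : p ∈ hexHull p m r := mem_hexHull.2 ⟨1, 0, 0, by simp, by simp⟩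
  have hr (m : ℂ) : r ∈ hexHull p m r := mem_hexHull.2 ⟨0, 0, 1, by simp, by simp⟩
  have hq : q = (ω q r / ω p r) • p + (ω p q / ω p r) • r := by
    have := congr_arg ((ω p r)⁻¹ • ·) (areaForm_smul_add_smul p q r)
    simpa only [smul_add, smul_smul, ← div_eq_inv_mul, div_self hpr.ne', one_smul]
      using this.symm
  refine (hexHull_subset_hexHull (hp _) ?_ (hr _)).antisymm
    (hexHull_subset_hexHull (hp _) ?_ (hr _))
  · exact mem_hexHull.2 ⟨1 / 2, 0, 1 / 2, by norm_num, by
      rw [midpoint_eq_smul_add, invOf_eq_inv]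
      module⟩
  · refine mem_hexHull.2 ⟨ω q r / ω p r, 0, ω p q / ω p r, ?_, ?_⟩
    · rw [abs_of_nonneg (div_nonneg hqr hpr.le), abs_of_nonneg (div_nonneg hpq hpr.le), abs_zero,
        add_zero, ← add_div, div_le_one hpr]
      linarith
    · rwa [zero_smul, add_zero]

theorem exists_convexTriple_hexHull_eq (h : (interior (hexHull p q r)).Nonempty) :
    ∃ p' q' r' : ℂ, ConvexTriple p' q' r' ∧ hexHull p' q' r' = hexHull p q r := by
  obtain ⟨p', q', r', heq, hpq, hqr, hpqr, hqrp⟩ := exists_hexHull_eq_areaForm_le p q r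
  have hpr : 0 < ω p' r' := by
    by_contra! hle
    rcases areaForm_ne_zero_of_interior_hexHull (heq ▸ h) with h | h | h
    all_goals exact h (by linarith)
  rcases le_or_gt (ω p' q' + ω q' r') (ω p' r') with hadd | hadd
  · exact ⟨p', _, r', convexTriple_midpoint hpr, (hexHull_midpoint hpq hqr hpr hadd).trans heq⟩
  · refine ⟨p', q', r', ⟨?_, ?_, hpr, ?_, ?_, ?_⟩, heq⟩ <;> linarith

end Existence

section SymHex

variable {d : ℂ} {y z : ℝ}

theorem convexTriple_symHex (hd : d ≠ 0) (hy : 0 < y) (hyz : y ≤ z) :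
    ConvexTriple (d * ⟨1 / 2, y⟩) (d * ⟨0, z⟩) (d * ⟨-1 / 2, y⟩) := by
  refine ConvexTriple.mul ⟨?_, ?_, ?_, ?_, ?_, ?_⟩ hd <;> simp only [areaForm_eq] <;> linarith

theorem volume_symHex (hd : d ≠ 0) (hy : 0 < y) (hyz : y ≤ z) :
    volume (symHex d y z) = ENNReal.ofReal (‖d‖ ^ 2 * (y + z)) := by
  rw [symHex, (convexTriple_symHex hd hy hyz).volume_hexHull]
  simp only [areaForm_mul_mul]
  simp only [areaForm_eq]
  ring_nf

theorem exists_steiner_symHex (hd : d ≠ 0) (hy : 0 < y) (hyz : y ≤ z) (f : ℂ ≃ᵃⁱ[ℝ] E2) :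
    ∃ (v : E2) (e : ℝ), ‖v‖ = 1 ∧ steiner v e (f '' symHex d y z) =
      f '' symHex (d * ⟨1 / 2, y + z⟩) (z / 2 / (1 / 4 + (y + z) ^ 2))
        ((y + z / 2) / (1 / 4 + (y + z) ^ 2)) := by
  obtain ⟨v, e, hv, hsteiner⟩ := (convexTriple_symHex hd hy hyz).rotate.exists_steiner f
  refine ⟨v, e, hv, ?_⟩
  have hbase : d * ⟨0, z⟩ - -(d * ⟨1 / 2, y⟩) = d * ⟨1 / 2, y + z⟩ := by
    rw [sub_neg_eq_add, ← mul_add]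
    congr 1
    apply Complex.ext <;> simp [add_comm]
  have hnorm : ‖d * ⟨1 / 2, y + z⟩‖ ^ 2 = ‖d‖ ^ 2 * (1 / 4 + (y + z) ^ 2) := by
    rw [norm_mul, mul_pow, Complex.sq_norm ⟨1 / 2, y + z⟩, Complex.normSq_mk]
    ring
  rw [hexHull_rotate, hbase, hnorm] at hsteiner
  simp only [map_neg, areaForm_mul_mul, ← mul_neg, ← mul_add] at hsteiner
  rw [mul_div_mul_left _ _ (by positivity), mul_div_mul_left _ _ (by positivity)] at hsteiner
  rw [symHex, hsteiner]
  simp only [areaForm_eq]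
  ring_nf

theorem tendsto_hausdorffEDist_symHex {ι : Type*} {l : Filter ι} {d : ι → ℂ} {y z : ι → ℝ}
    {d' : ℂ} {y' z' : ℝ} (hd : Tendsto d l (𝓝 d')) (hy : Tendsto y l (𝓝 y'))
    (hz : Tendsto z l (𝓝 z')) :
    Tendsto (fun i => hausdorffEDist (symHex (d i) (y i) (z i)) (symHex d' y' z')) l (𝓝 0) := by
  have hmk (x : ℝ) {t : ι → ℝ} {t' : ℝ} (ht : Tendsto t l (𝓝 t')) :
      Tendsto (fun i => (⟨x, t i⟩ : ℂ)) l (𝓝 ⟨x, t'⟩) :=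
    (Complex.equivRealProdCLM.symm.continuous.tendsto (x, t')).comp
      (tendsto_const_nhds.prodMk_nhds ht)
  exact tendsto_hausdorffEDist_hexHull (hd.mul (hmk _ hy)) (hd.mul (hmk _ hz)) (hd.mul (hmk _ hy))

end SymHex

section Dynamics

/-- The orbit of `u` under `x ↦ x / 4 + 1 / x`. It records the squared length of the distinguished
side of the hexagons in the iteration, in units of their area. -/
def sideRatio (u : ℝ) : ℕ → ℝ
  | 0 => u
  | n + 1 => sideRatio u n / 4 + (sideRatio u n)⁻¹

/-- The orbit of `ρ` under `x ↦ (1 - x) / 2`. It records the height of the distinguished side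
of the hexagons in the iteration, in units of the sum of the heights of the vertices of `symHex`. -/
def heightRatio (ρ : ℝ) : ℕ → ℝ
  | 0 => ρ
  | n + 1 => (1 - heightRatio ρ n) / 2

/-- The distinguished side of the hexagons in the iteration, starting from `d`. -/
def baseSide (d : ℂ) (u : ℝ) : ℕ → ℂ
  | 0 => d
  | n + 1 => baseSide d u n * ⟨1 / 2, (sideRatio u n)⁻¹⟩

/-- The iteration: each hexagon is symmetrized with respect to the perpendicular bisector of the
side following the distinguished one, which becomes the new distinguished side. -/
def symHexSeq (d : ℂ) (u ρ : ℝ) (n : ℕ) : Set ℂ :=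
  symHex (baseSide d u n) (heightRatio ρ n / sideRatio u n)
    ((1 - heightRatio ρ n) / sideRatio u n)

variable {d : ℂ} {u ρ : ℝ}

theorem sideRatio_pos (hu : 0 < u) : ∀ n, 0 < sideRatio u n
  | 0 => hu
  | n + 1 => by
    have := sideRatio_pos hu n
    rw [sideRatio]
    positivity

theorem one_le_sideRatio_succ (hu : 0 < u) (n : ℕ) : 1 ≤ sideRatio u (n + 1) := by
  have hpos := sideRatio_pos hu n
  have h : sideRatio u (n + 1) - 1 = (sideRatio u n / 2 - 1) ^ 2 / sideRatio u n := by
    rw [sideRatio]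
    field_simp
    ring
  exact sub_nonneg.1 (h ▸ by positivity)

theorem heightRatio_mem_Ioc (hρ : ρ ∈ Ioc 0 (1 / 2)) : ∀ n, heightRatio ρ n ∈ Ioc 0 (1 / 2)
  | 0 => hρ
  | n + 1 => by
    have h := heightRatio_mem_Ioc hρ n
    rw [mem_Ioc] at *
    rw [heightRatio]
    constructor <;> linarith

theorem norm_baseSide_sq_div (hu : 0 < u) (n : ℕ) :
    ‖baseSide d u n‖ ^ 2 / sideRatio u n = ‖d‖ ^ 2 / u := by
  induction n with
  | zero => rfl
  | succ n ih =>
    have hpos := sideRatio_pos hu n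
    rw [← ih, baseSide, sideRatio, norm_mul, mul_pow,
      Complex.sq_norm ⟨1 / 2, (sideRatio u n)⁻¹⟩, Complex.normSq_mk]
    field_simp
    ring

theorem baseSide_ne_zero (hd : d ≠ 0) (hu : 0 < u) (n : ℕ) : baseSide d u n ≠ 0 := by
  intro h
  have := norm_baseSide_sq_div (d := d) hu n
  rw [h, norm_zero, zero_pow two_ne_zero, zero_div] at this
  have : 0 < ‖d‖ ^ 2 / u := by positivity
  linarith

theorem exists_steiner_symHexSeq (hd : d ≠ 0) (hu : 0 < u) (hρ : ρ ∈ Ioc 0 (1 / 2))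
    (f : ℂ ≃ᵃⁱ[ℝ] E2) (n : ℕ) : ∃ (v : E2) (e : ℝ), ‖v‖ = 1 ∧
      steiner v e (f '' symHexSeq d u ρ n) = f '' symHexSeq d u ρ (n + 1) := by
  have hun := sideRatio_pos hu n
  obtain ⟨hρ0, hρ1⟩ := heightRatio_mem_Ioc hρ n
  obtain ⟨v, e, hv, hsteiner⟩ := exists_steiner_symHex (baseSide_ne_zero hd hu n)
    (div_pos hρ0 hun) (div_le_div_of_nonneg_right (by linarith : _ ≤ 1 - heightRatio ρ n) hun.le) f
  refine ⟨v, e, hv, hsteiner.trans ?_⟩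
  rw [← add_div, add_sub_cancel, one_div, symHexSeq, baseSide, heightRatio, sideRatio]
  congr 2 <;> field_simp
  ring

end Dynamics

section Convergence

variable {d : ℂ} {u : ℝ}

theorem abs_sideRatio_succ_sub_le (hu : 0 < u) {n : ℕ} (hn : 1 ≤ n) :
    |sideRatio u (n + 1) - 2 / √3| ≤ 5 / 8 * |sideRatio u n - 2 / √3| := by
  obtain ⟨m, rfl⟩ := Nat.exists_eq_add_of_le' hn
  have h1 := one_le_sideRatio_succ hu m
  rw [sideRatio]
  generalize sideRatio u (m + 1) = x at *
  have : 0 < x := by linarith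
  have h3 : √3 ^ 2 = 3 := Real.sq_sqrt (by norm_num)
  have hfactor : x / 4 + x⁻¹ - 2 / √3 = (1 / 4 - √3 / 2 / x) * (x - 2 / √3) := by
    field_simp
    linear_combination 4 * x * h3
  have hsqrt : √3 ≤ 7 / 4 := Real.sqrt_le_iff.2 ⟨by norm_num, by norm_num⟩
  have hdiv : √3 / 2 / x ≤ 7 / 8 := (div_le_self (by positivity) h1).trans (by linarith)
  have hdiv0 : 0 ≤ √3 / 2 / x := by positivity
  rw [hfactor, abs_mul]
  gcongr
  exact abs_le.2 ⟨by linarith, by linarith⟩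

theorem summable_sideRatio_sub (hu : 0 < u) : Summable fun n => sideRatio u n - 2 / √3 :=
  summable_of_ratio_norm_eventually_le (r := 5 / 8) (by norm_num) <|
    (eventually_ge_atTop 1).mono fun _ hn => abs_sideRatio_succ_sub_le hu hn

theorem tendsto_sideRatio (hu : 0 < u) : Tendsto (sideRatio u) atTop (𝓝 (2 / √3)) :=
  tendsto_sub_nhds_zero_iff.1 (summable_sideRatio_sub hu).tendsto_atTop_zero

theorem summable_abs_inv_sideRatio_sub (hu : 0 < u) :
    Summable fun n => |(sideRatio u n)⁻¹ - √3 / 2| := by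
  refine (Summable.of_norm_bounded_eventually_nat (summable_sideRatio_sub hu).abs ?_).abs
  filter_upwards [eventually_ge_atTop 1] with n hn
  obtain ⟨m, rfl⟩ := Nat.exists_eq_add_of_le' hn
  have h1 := one_le_sideRatio_succ hu m
  generalize sideRatio u (m + 1) = x at *
  have : 0 < x := by linarith
  have hsqrt : √3 ≤ 2 := Real.sqrt_le_iff.2 ⟨by norm_num, by norm_num⟩
  have hdiff : x⁻¹ - √3 / 2 = -(√3 / 2 / x) * (x - 2 / √3) := by
    field_simp
    ring
  rw [hdiff, Real.norm_eq_abs, abs_mul, abs_neg, abs_of_nonneg (by positivity)]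
  exact mul_le_of_le_one_left (abs_nonneg _) ((div_le_self (by positivity) h1).trans (by linarith))

theorem tendsto_heightRatio (ρ : ℝ) : Tendsto (heightRatio ρ) atTop (𝓝 (1 / 3)) := by
  have hclosed (n : ℕ) : heightRatio ρ n = 1 / 3 + (-1 / 2) ^ n * (ρ - 1 / 3) := by
    induction n with
    | zero => rw [heightRatio]; ring
    | succ n ih => rw [heightRatio, ih]; ring
  have hpow : Tendsto (fun n => (-1 / 2 : ℝ) ^ n) atTop (𝓝 0) :=
    tendsto_pow_atTop_nhds_zero_of_abs_lt_one (by norm_num [abs_lt])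
  rw [funext hclosed]
  simpa only [zero_mul, add_zero] using (hpow.mul_const (ρ - 1 / 3)).const_add (1 / 3)

/-- The primitive sixth root of unity `exp (iπ / 3)`, by which the distinguished side of the
hexagons is multiplied at each step in the limit. -/
def hexRoot : Circle := Circle.exp (π / 3)

theorem coe_hexRoot : (hexRoot : ℂ) = ⟨1 / 2, √3 / 2⟩ := by
  rw [hexRoot, Circle.coe_exp]
  apply Complex.ext
  · rw [Complex.exp_ofReal_mul_I_re, Real.cos_pi_div_three]
  · rw [Complex.exp_ofReal_mul_I_im, Real.sin_pi_div_three]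

theorem exists_tendsto_baseSide (d : ℂ) (hu : 0 < u) :
    ∃ D, Tendsto (fun n => ↑(hexRoot ^ n)⁻¹ * baseSide d u n) atTop (𝓝 D) := by
  have hmk (t : ℝ) : (⟨1 / 2, t⟩ : ℂ) = hexRoot + (t - √3 / 2 : ℝ) * Complex.I := by
    rw [coe_hexRoot]
    apply Complex.ext <;> simp
  have hprod (n : ℕ) : ↑(hexRoot ^ n)⁻¹ * baseSide d u n =
      d * ∏ k ∈ Finset.range n, (1 + ((sideRatio u k)⁻¹ - √3 / 2 : ℝ) * Complex.I / hexRoot) := by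
    induction n with
    | zero => simp [baseSide]
    | succ n ih =>
      rw [Finset.prod_range_succ, ← mul_assoc, ← ih, baseSide, hmk, pow_succ]
      push_cast
      field_simp
  have hsum : Summable fun k =>
      ‖((sideRatio u k)⁻¹ - √3 / 2 : ℝ) * Complex.I / (hexRoot : ℂ)‖ := by
    simpa only [norm_div, norm_mul, Circle.norm_coe, Complex.norm_I, Complex.norm_real,
      Real.norm_eq_abs, mul_one, div_one] using summable_abs_inv_sideRatio_sub hu
  exact ⟨_, (funext hprod) ▸
    (multipliable_one_add_of_summable hsum).tendsto_prod_tprod_nat.const_mul d⟩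

theorem exists_tendsto_symHexSeq (d : ℂ) (hu : 0 < u) (ρ : ℝ) :
    ∃ D, ‖D‖ ^ 2 = 2 / √3 * (‖d‖ ^ 2 / u) ∧ Tendsto (fun n => hausdorffEDist
      (rotation (hexRoot ^ n)⁻¹ '' symHexSeq d u ρ n) (symHex D (√3 / 6) (√3 / 3))) atTop
      (𝓝 0) := by
  obtain ⟨D, hD⟩ := exists_tendsto_baseSide d hu
  refine ⟨D, ?_, ?_⟩
  · have hnorm (n : ℕ) : ‖↑(hexRoot ^ n)⁻¹ * baseSide d u n‖ ^ 2 =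
        sideRatio u n * (‖d‖ ^ 2 / u) := by
      rw [norm_mul, Circle.norm_coe, one_mul, ← norm_baseSide_sq_div hu n,
        mul_div_cancel₀ _ (sideRatio_pos hu n).ne']
    exact tendsto_nhds_unique (hD.norm.pow 2)
      ((funext hnorm) ▸ (tendsto_sideRatio hu).mul_const _)
  · have hρ := tendsto_heightRatio ρ
    have hy := hρ.div (tendsto_sideRatio hu) (by positivity)
    have hz := (hρ.const_sub 1).div (tendsto_sideRatio hu) (by positivity)
    have hlimy : 1 / 3 / (2 / √3) = √3 / 6 := by field_simp; norm_num
    have hlimz : (1 - 1 / 3) / (2 / √3) = √3 / 3 := by field_simp; norm_num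
    rw [hlimy] at hy
    rw [hlimz] at hz
    simpa only [symHexSeq, symHex, image_hexHull, rotation_apply, mul_assoc, Pi.div_apply]
      using tendsto_hausdorffEDist_symHex hD hy hz

end Convergence

section RegularHexagon

/-- The regular hexagon centred at the origin with vertices `hexRoot ^ k * w`. -/
def regHex (w : ℂ) : Set ℂ := hexHull w (hexRoot * w) (hexRoot ^ 2 * w)

theorem hexRoot_pow_three : (hexRoot : ℂ) ^ 3 = -1 := by
  rw [hexRoot, Circle.coe_exp, ← Complex.exp_nat_mul]
  convert Complex.exp_pi_mul_I using 2
  push_cast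
  ring

theorem rotation_hexRoot_image_regHex (w : ℂ) : rotation hexRoot '' regHex w = regHex w := by
  have h : rotation hexRoot (hexRoot ^ 2 * w) = -w := by
    rw [rotation_apply, ← mul_assoc, ← pow_succ', hexRoot_pow_three, neg_one_mul]
  rw [regHex, image_hexHull, h, rotation_apply, rotation_apply, ← mul_assoc, ← sq, hexHull_rotate]

theorem rotation_hexRoot_pow_image_regHex (n : ℕ) (w : ℂ) :
    rotation (hexRoot ^ n) '' regHex w = regHex w := by
  induction n with
  | zero => simp
  | succ n ih => rw [pow_succ, map_mul, LinearIsometryEquiv.coe_mul, image_comp,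
      rotation_hexRoot_image_regHex, ih]

theorem rotation_hexRoot_pow_inv_image_regHex (n : ℕ) (w : ℂ) :
    rotation (hexRoot ^ n)⁻¹ '' regHex w = regHex w := by
  conv_lhs => rw [← rotation_hexRoot_pow_image_regHex n w, image_image]
  simp

theorem symHex_eq_regHex (d : ℂ) :
    symHex d (√3 / 6) (√3 / 3) = regHex (d * ⟨1 / 2, √3 / 6⟩) := by
  have h3 : √3 ^ 2 = 3 := Real.sq_sqrt (by norm_num)
  have h1 : (hexRoot : ℂ) * ⟨1 / 2, √3 / 6⟩ = ⟨0, √3 / 3⟩ := by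
    rw [coe_hexRoot]
    apply Complex.ext
    · simp only [Complex.mul_re]
      linear_combination -h3 / 12
    · simp only [Complex.mul_im]
      ring
  have h2 : (hexRoot : ℂ) * ⟨0, √3 / 3⟩ = ⟨-1 / 2, √3 / 6⟩ := by
    rw [coe_hexRoot]
    apply Complex.ext
    · simp only [Complex.mul_re]
      linear_combination -h3 / 6
    · simp only [Complex.mul_im]
      ring
  rw [symHex, regHex, mul_left_comm, h1, sq, mul_assoc, mul_left_comm _ d, h1, mul_left_comm, h2]

theorem hexVertex_eq (k : ℕ) :
    hexVertex k = Complex.orthonormalBasisOneI.repr (hexRoot ^ k : ℂ) := by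
  have h : (hexRoot ^ k : ℂ) = Complex.exp ((k * π / 3 : ℝ) * Complex.I) := by
    rw [hexRoot, Circle.coe_exp, ← Complex.exp_nat_mul]
    push_cast
    ring_nf
  ext i
  rw [h, Complex.orthonormalBasisOneI_repr_apply, Complex.exp_ofReal_mul_I_re,
    Complex.exp_ofReal_mul_I_im]
  rfl

theorem stdHexagon_eq : stdHexagon = Complex.orthonormalBasisOneI.repr '' regHex 1 := by
  have hpow (k : ℕ) : (hexRoot : ℂ) ^ (k + 3) = -hexRoot ^ k := by
    rw [pow_add, hexRoot_pow_three, mul_neg_one]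
  rw [stdHexagon, regHex, image_hexHull, hexHull_eq_convexHull_range]
  congr 2
  funext k
  rw [hexVertex_eq]
  fin_cases k <;> simp [hpow]

theorem isRegularHexagon_image_regHex (f : ℂ ≃ᵃⁱ[ℝ] E2) {w : ℂ} (hw : w ≠ 0) :
    IsRegularHexagon (f '' regHex w) := by
  refine ⟨fun x => f (w * Complex.orthonormalBasisOneI.repr.symm x), ⟨‖w‖, norm_pos_iff.2 hw,
    fun x y => ?_⟩, ?_⟩
  · rw [f.dist_map, dist_eq_norm, ← mul_sub, ← map_sub, norm_mul, LinearIsometryEquiv.norm_map,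
      dist_eq_norm]
  · have hmul : regHex w = LinearMap.mulLeft ℝ w '' regHex 1 := by
      simp only [regHex, image_hexHull, LinearMap.mulLeft_apply, one_mul, mul_one,
        mul_comm w]
    rw [stdHexagon_eq, image_image, hmul, image_image]
    simp

end RegularHexagon

section HexSeq

/-- The iteration starting from `hexHull p q r`, whose first step is the symmetrization with
respect to the perpendicular bisector of the side from `r` to `p`. -/
def hexSeq (p q r : ℂ) : ℕ → Set ℂ
  | 0 => hexHull p q r
  | n + 1 => symHexSeq (p - r) (‖p - r‖ ^ 2 / (ω p q + ω q r + ω p r))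
      (ω p r / (ω p q + ω q r + ω p r)) n

theorem isCompact_hexSeq (p q r : ℂ) : ∀ n, IsCompact (hexSeq p q r n)
  | 0 => isCompact_hexHull ..
  | _ + 1 => isCompact_hexHull ..

theorem convex_hexSeq (p q r : ℂ) : ∀ n, Convex ℝ (hexSeq p q r n)
  | 0 => convex_hexHull ..
  | _ + 1 => convex_hexHull ..

namespace ConvexTriple

variable {p q r : ℂ}

theorem area_pos (h : ConvexTriple p q r) : 0 < ω p q + ω q r + ω p r :=
  add_pos (add_pos h.pos_left h.pos_right) h.pos_outer

theorem exists_steiner_hexSeq (h : ConvexTriple p q r) (f : ℂ ≃ᵃⁱ[ℝ] E2) (n : ℕ) :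
    ∃ (v : E2) (e : ℝ), ‖v‖ = 1 ∧
      steiner v e (f '' hexSeq p q r n) = f '' hexSeq p q r (n + 1) := by
  have hS := h.area_pos
  have hpr := norm_pos_iff.2 h.sub_ne_zero
  cases n with
  | zero =>
    obtain ⟨v, e, hv, hsteiner⟩ := h.exists_steiner f
    refine ⟨v, e, hv, hsteiner.trans ?_⟩
    rw [hexSeq, symHexSeq, baseSide, heightRatio, sideRatio]
    congr 2 <;> field_simp
    ring
  | succ n =>
    refine exists_steiner_symHexSeq h.sub_ne_zero (by positivity) ⟨div_pos h.pos_outer hS, ?_⟩ f n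
    rw [div_le_div_iff₀ hS two_pos]
    linarith [h.outer_le]

theorem exists_tendsto_hexSeq (h : ConvexTriple p q r) :
    ∃ w : ℂ, w ≠ 0 ∧ volume (regHex w) = volume (hexHull p q r) ∧
      Tendsto (fun n => hausdorffEDist (hexSeq p q r n) (regHex w)) atTop (𝓝 0) := by
  have hS := h.area_pos
  have hpr := norm_pos_iff.2 h.sub_ne_zero
  obtain ⟨D, hD, hlim⟩ := exists_tendsto_symHexSeq (p - r)
    (u := ‖p - r‖ ^ 2 / (ω p q + ω q r + ω p r)) (by positivity)
    (ω p r / (ω p q + ω q r + ω p r))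
  rw [div_div_cancel₀ (by positivity)] at hD
  have hD0 : D ≠ 0 := by
    rintro rfl
    rw [norm_zero, zero_pow two_ne_zero] at hD
    exact (show 0 < 2 / √3 * (ω p q + ω q r + ω p r) by positivity).ne hD
  have h3 : 0 < √3 := by positivity
  refine ⟨D * ⟨1 / 2, √3 / 6⟩, mul_ne_zero hD0 fun h0 => ?_, ?_, ?_⟩
  · exact one_half_pos.ne' (congrArg Complex.re h0)
  · rw [← symHex_eq_regHex, volume_symHex hD0 (by positivity) (by linarith), hD, h.volume_hexHull]
    congr 1
    field_simp
    norm_num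
  · rw [← tendsto_add_atTop_iff_nat 1]
    refine hlim.congr fun n => ?_
    rw [symHex_eq_regHex, ← rotation_hexRoot_pow_inv_image_regHex n,
      hausdorffEDist_image (rotation _).isometry, rotation_hexRoot_pow_inv_image_regHex, hexSeq]

end ConvexTriple

theorem Hex.exists_eq_image_hexHull {H : Set E2} (hH : Hex H) :
    ∃ (f : ℂ ≃ᵃⁱ[ℝ] E2) (p q r : ℂ), ConvexTriple p q r ∧ H = f '' hexHull p q r := by
  obtain ⟨⟨x₀, p, q, r, hHull⟩, hint⟩ := hH
  let e : ℂ ≃ₗᵢ[ℝ] E2 := Complex.orthonormalBasisOneI.repr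
  let f : ℂ ≃ᵃⁱ[ℝ] E2 := e.toAffineIsometryEquiv.trans (AffineIsometryEquiv.constVAdd ℝ E2 x₀)
  have hf : H = f '' hexHull (e.symm p) (e.symm q) (e.symm r) := by
    have hH' : hexHull p q r = e '' hexHull (e.symm p) (e.symm q) (e.symm r) := by
      simp only [image_hexHull, e.apply_symm_apply]
    rw [hHull, ← hexHull, hH', image_image]
    rfl
  rw [hf, ← f.coe_toHomeomorph, ← f.toHomeomorph.image_interior, image_nonempty] at hint
  obtain ⟨p', q', r', hconvex, heq⟩ := exists_convexTriple_hexHull_eq hint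
  exact ⟨f, p', q', r', hconvex, heq ▸ hf⟩

end HexSeq

/-- Every centrally symmetric convex hexagon or parallelogram can be
transformed into a regular hexagon of the same area by (at most countably many) iterated
Steiner symmetrizations. -/
theorem statement0 (H₀ : Set E2) (hH₀ : Hex H₀) :
    ∃ (v : ℕ → E2) (c : ℕ → ℝ) (H : ℕ → Set E2) (Hstar : Set E2),
      (∀ n, ‖v n‖ = 1) ∧
      H 0 = H₀ ∧
      (∀ n, IsCompact (H n) ∧ Convex ℝ (H n)) ∧
      (∀ n, H (n + 1) = steiner (v n) (c n) (H n)) ∧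
      IsRegularHexagon Hstar ∧
      volume Hstar = volume H₀ ∧
      HausdorffTendsto H Hstar := by
  obtain ⟨f, p, q, r, hpqr, rfl⟩ := hH₀.exists_eq_image_hexHull
  obtain ⟨w, hw, hvol, hlim⟩ := hpqr.exists_tendsto_hexSeq
  choose v c hv hsteiner using hpqr.exists_steiner_hexSeq f
  refine ⟨v, c, fun n => f '' hexSeq p q r n, f '' regHex w, hv, rfl, fun n => ⟨?_, ?_⟩,
    fun n => (hsteiner n).symm, isRegularHexagon_image_regHex f hw, ?_, ?_⟩
  · exact (isCompact_hexSeq p q r n).image f.continuous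
  · exact (convex_hexSeq p q r n).affine_image f.toAffineEquiv.toAffineMap
  · rw [volume_image_affineIsometryEquiv, volume_image_affineIsometryEquiv, hvol]
  · exact hlim.congr fun n => (hausdorffEDist_image f.isometry).symm
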